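/- Let E be a real inner product space, let f : E → ℝ be differentiable with gradient ∇f that is Lipschitz continuous with constant L > 0, and let α > 0 satisfy α ≤ 1/L. Suppose θ' = θ + α(∇f(θ) + e₁ + e₂ − e₃) for vectors e₁, e₂, e₃ ∈ E (the lazily aggregated policy-gradient update, where e₁ is the truncation error of the gradient, e₂ is the stochastic estimation error, and e₃ is the aggregate of the skipped agents' gradient innovations). Then f(θ) − f(θ') ≤ −(α/2)‖∇f(θ)‖² + (3α/2)‖e₁‖² + (3α/2)‖e₂‖² + (3α/2)‖e₃‖² + (L/2 − 1/(2α))‖θ' − θ‖². -/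

import Mathlib

theorem lapg_aux_lower {E : Type*} [NormedAddCommGroup E] [InnerProductSpace ℝ E]
    [CompleteSpace E]
    (f : E → ℝ) (hf : Differentiable ℝ f) (L : ℝ)
    (hlip : ∀ x y : E, ‖gradient f x - gradient f y‖ ≤ L * ‖x - y‖) (x d : E) :
    f x + inner ℝ (gradient f x) d - L / 2 * ‖d‖ ^ 2 ≤ f (x + d) := by
  have hd : ∀ t : ℝ, HasDerivAt
      (fun t : ℝ => f (x + t • d) - t * inner ℝ (gradient f x) d + L / 2 * ‖d‖ ^ 2 * t ^ 2)
      (inner ℝ (gradient f (x + t • d)) d - 1 * inner ℝ (gradient f x) d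
        + L / 2 * ‖d‖ ^ 2 * (2 * t)) t := by
    intro t
    have h1 : HasDerivAt (fun t : ℝ => x + t • d) d t := by
      simpa using ((hasDerivAt_id t).smul_const d).const_add x
    have h2 := (hf (x + t • d)).hasGradientAt.hasFDerivAt.comp_hasDerivAt t h1
    have h3 : HasDerivAt (fun t : ℝ => f (x + t • d)) (inner ℝ (gradient f (x + t • d)) d) t := by
      exact h2
    have h4 : HasDerivAt (fun t : ℝ => t ^ 2) (2 * t) t := by
      simpa using hasDerivAt_pow 2 t
    exact (h3.sub ((hasDerivAt_id t).mul_const _)).add (h4.const_mul _)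
  have hm := monotoneOn_of_deriv_nonneg (convex_Icc (0 : ℝ) 1)
    (fun t _ => (hd t).continuousAt.continuousWithinAt)
    (fun t _ => (hd t).differentiableAt.differentiableWithinAt)
    (fun t ht => by
      rw [interior_Icc] at ht
      rw [(hd t).deriv]
      have h1 := hlip (x + t • d) x
      rw [add_sub_cancel_left, norm_smul, Real.norm_of_nonneg ht.1.le] at h1
      have h2 := neg_le_of_abs_le
        (abs_real_inner_le_norm (gradient f (x + t • d) - gradient f x) d)
      rw [inner_sub_left] at h2
      have h3 := mul_le_mul_of_nonneg_right h1 (norm_nonneg d)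
      nlinarith)
  have := hm (Set.left_mem_Icc.2 zero_le_one) (Set.right_mem_Icc.2 zero_le_one) zero_le_one
  simp only [zero_smul, one_smul, add_zero, zero_mul, one_mul, sub_zero] at this
  linarith

/-- **LAPG Ascent lemma.** If `f : E → ℝ` is differentiable with `L`-Lipschitz
gradient, `0 < α ≤ 1/L`, and `θ' = θ + α • (∇f θ + e₁ + e₂ - e₃)` is the lazily
aggregated policy-gradient update (with gradient truncation error `e₁`,
stochastic estimation error `e₂`, and aggregated skipped innovations `e₃`), then
`f θ - f θ' ≤ -(α/2)‖∇f θ‖² + (3α/2)‖e₁‖² + (3α/2)‖e₂‖² + (3α/2)‖e₃‖²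
  + (L/2 - 1/(2α))‖θ' - θ‖²`. -/
theorem lapg_ascent {E : Type*} [NormedAddCommGroup E] [InnerProductSpace ℝ E]
    [CompleteSpace E]
    (f : E → ℝ) (hf : Differentiable ℝ f) (L : ℝ) (hL : 0 < L)
    (hlip : ∀ x y : E, ‖gradient f x - gradient f y‖ ≤ L * ‖x - y‖)
    (α : ℝ) (hα : 0 < α) (hαL : α ≤ 1 / L)
    (θ θ' e₁ e₂ e₃ : E)
    (hupd : θ' = θ + α • (gradient f θ + e₁ + e₂ - e₃)) :
    f θ - f θ' ≤ -(α / 2) * ‖gradient f θ‖ ^ 2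
      + (3 * α / 2) * ‖e₁‖ ^ 2 + (3 * α / 2) * ‖e₂‖ ^ 2 + (3 * α / 2) * ‖e₃‖ ^ 2
      + (L / 2 - 1 / (2 * α)) * ‖θ' - θ‖ ^ 2 := by
  have h := lapg_aux_lower f hf L hlip θ (θ' - θ)
  rw [add_sub_cancel] at h
  set g := gradient f θ
  have hd : θ' - θ = α • (g + (e₁ + e₂ - e₃)) := by
    rw [hupd, add_sub_cancel_left]; congr 1; abel
  have he : ‖e₁ + e₂ - e₃‖ ^ 2 ≤ 3 * ‖e₁‖ ^ 2 + 3 * ‖e₂‖ ^ 2 + 3 * ‖e₃‖ ^ 2 := by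
    have h1 : ‖e₁ + e₂ - e₃‖ ≤ ‖e₁‖ + ‖e₂‖ + ‖e₃‖ :=
      (norm_sub_le _ _).trans (by gcongr; exact norm_add_le _ _)
    have h2 := pow_le_pow_left₀ (norm_nonneg _) h1 2
    nlinarith [sq_nonneg (‖e₁‖ - ‖e₂‖), sq_nonneg (‖e₁‖ - ‖e₃‖), sq_nonneg (‖e₂‖ - ‖e₃‖)]
  have hn : 1 / (2 * α) * ‖θ' - θ‖ ^ 2
      = α / 2 * (‖g‖ ^ 2 + 2 * inner ℝ g (e₁ + e₂ - e₃) + ‖e₁ + e₂ - e₃‖ ^ 2) := by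
    rw [hd, norm_smul, mul_pow, Real.norm_of_nonneg hα.le, norm_add_sq_real]
    field_simp
  have hi : inner ℝ g (θ' - θ) = α * (‖g‖ ^ 2 + inner ℝ g (e₁ + e₂ - e₃)) := by
    rw [hd, real_inner_smul_right, inner_add_right, real_inner_self_eq_norm_sq]
  have := mul_le_mul_of_nonneg_left he hα.le
  rw [sub_mul, hn]
  rw [hi] at h
  linarith
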